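/- arXiv:2211.03606 — 2 statements merged into one kernel-verified Lean document; each statement's English description precedes it below -/
import Mathlib

section
/- Let ψ : ℝ³ → (0,∞) be smooth, radial, with ‖ψ‖_{L²} = 1, and suppose ψ together with all its partial derivatives up to second order is bounded by C₀ e^{−|x|/C₀} for some C₀ > 0. Define φ(z) := ∫_{ℝ³} ψ(x)² / (2π²|z−x|²) dx, H(y) := ∫_{ℝ³} ψ(x)ψ(x+y) dx, and l_y(z) := H(y) φ(z) − ∫_{ℝ³} ψ(x) ψ(x+y) / (2π² |x−z|²) dx. Then for k = 0, 1: sup_{y ∈ ℝ³} ‖∇^k l_y‖_{L²} < ∞, and for every integer n ≥ 0, ∫_{ℝ³} |y|^n ‖∇^k l_y‖_{L²} dy < ∞. -/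
open MeasureTheory Real
noncomputable section

abbrev E3 := EuclideanSpace ℝ (Fin 3)

lemma exp_bd (c : ℝ) (hc : 0 < c) (n : ℕ) : ∃ C : ℝ, 0 ≤ C ∧ ∀ t : ℝ, 0 ≤ t →
    t ^ n * exp (-c * t) ≤ C * ((1 + t ^ 2) ^ 2)⁻¹ := by
  refine ⟨exp c * (n + 4).factorial / c ^ (n + 4), by positivity, fun t ht => ?_⟩
  have h := Real.pow_div_factorial_le_exp (c * (1 + t)) (by positivity) (n + 4)
  rw [div_le_iff₀ (by positivity), mul_pow] at h
  have h2 : t ^ n * (1 + t ^ 2) ^ 2 ≤ (1 + t) ^ (n + 4) := by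
    rw [pow_add]
    have : (1 + t ^ 2) ^ 2 ≤ (1 + t) ^ 4 := by
      have : (1 + t) ^ 4 = ((1 + t) ^ 2) ^ 2 := by ring
      rw [this]; gcongr; nlinarith
    have h3 : t ^ n ≤ (1 + t) ^ n := by gcongr; linarith
    gcongr
  rw [← div_eq_mul_inv, le_div_iff₀ (by positivity), le_div_iff₀ (by positivity)]
  have h4 : exp (c * (1 + t)) * exp (-c * t) = exp c := by rw [← exp_add]; congr 1; ring
  calc t ^ n * exp (-c * t) * (1 + t ^ 2) ^ 2 * c ^ (n + 4)
      = exp (-c * t) * (c ^ (n+4) * (t ^ n * (1 + t ^ 2) ^ 2)) := by ring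
    _ ≤ exp (-c * t) * (c ^ (n+4) * (1 + t) ^ (n + 4)) := by gcongr
    _ ≤ exp (-c * t) * (exp (c * (1 + t)) * (n + 4).factorial) := by gcongr
    _ = _ := by rw [← h4]; ring

lemma intW : Integrable (fun z : E3 => ((1 + ‖z‖ ^ 2) ^ 2)⁻¹) := by
  have := integrable_rpow_neg_one_add_norm_sq (E := E3) (μ := volume) (r := 4) (by simp; norm_num)
  refine this.congr (.of_forall fun z => ?_)
  simp only
  rw [show (-(4:ℝ)/2) = -(2:ℕ) by norm_num, Real.rpow_neg (by positivity), Real.rpow_natCast]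

lemma int_exp (c : ℝ) (hc : 0 < c) (n : ℕ) :
    Integrable (fun z : E3 => ‖z‖ ^ n * exp (-c * ‖z‖)) := by
  obtain ⟨C, hC, h⟩ := exp_bd c hc n
  refine (intW.const_mul C).mono' (by fun_prop) (.of_forall fun z => ?_)
  rw [Real.norm_of_nonneg (by positivity)]
  exact h _ (norm_nonneg _)

lemma int_exp0 (c : ℝ) (hc : 0 < c) :
    Integrable (fun z : E3 => exp (-c * ‖z‖)) := by
  simpa using int_exp c hc 0

def K (x : E3) : ℝ := (2 * π ^ 2 * ‖x‖ ^ 2)⁻¹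

lemma K_nonneg (x : E3) : 0 ≤ K x := by unfold K; positivity
lemma K_meas : Measurable K := by unfold K; fun_prop

lemma K_int : Integrable (Set.indicator (Metric.ball (0:E3) 1) K) := by
  let f : ℝ → ℝ := Set.indicator (Set.Iio 1) (fun r => (2 * π ^ 2 * r ^ 2)⁻¹)
  have : Set.indicator (Metric.ball (0:E3) 1) K = fun x : E3 => f ‖x‖ := by
    ext x
    simp [f, Set.indicator, K]
  rw [this, integrable_fun_norm_addHaar volume (f := f)]
  have h : IntegrableOn (fun r : ℝ => (2 * π ^ 2)⁻¹) (Set.Ioo 0 1) :=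
    integrableOn_const (by simp)
  have h2 : IntegrableOn (Set.indicator (Set.Iio 1) (fun r : ℝ => (2 * π ^ 2)⁻¹)) (Set.Ioi 0) := by
    rw [IntegrableOn, integrable_indicator_iff measurableSet_Iio, IntegrableOn,
      Measure.restrict_restrict measurableSet_Iio, Set.inter_comm, Set.Ioi_inter_Iio]
    exact h
  refine h2.congr_fun (fun r hr => ?_) measurableSet_Ioi
  have hr : r ≠ 0 := ne_of_gt hr
  simp only [f, Set.indicator]
  split_ifs
  · simp; field_simp
  · simp

lemma K_le (x : E3) (hx : 1 ≤ ‖x‖) : K x ≤ 1 := by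
  unfold K
  apply inv_le_one_of_one_le₀
  have : 3 < π := pi_gt_three
  have h1 : 1 ≤ π ^ 2 := by nlinarith
  have h2 : 1 ≤ ‖x‖ ^ 2 := by nlinarith
  nlinarith

lemma KE_le (c : ℝ) (hc : 0 < c) (z x : E3) : K x * exp (-c * ‖x + z‖) ≤
    Set.indicator (Metric.ball (0:E3) 1) K x + exp (-c * ‖x + z‖) := by
  have hK := K_nonneg x
  have he := exp_pos (-c * ‖x + z‖)
  by_cases h : ‖x‖ < 1
  · have : exp (-c * ‖x + z‖) ≤ 1 := by
      rw [exp_le_one_iff]; have := norm_nonneg (x + z); nlinarith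
    rw [Set.indicator_of_mem (by simpa using h)]; nlinarith
  · rw [Set.indicator_of_notMem (by simpa using h)]
    have := K_le x (not_lt.1 h)
    nlinarith

lemma int_shift (c : ℝ) (hc : 0 < c) (z : E3) : Integrable (fun x : E3 => exp (-c * ‖x + z‖)) :=
  (int_exp0 c hc).comp_add_right z

lemma KE_int (c : ℝ) (hc : 0 < c) (z : E3) : Integrable (fun x : E3 => K x * exp (-c * ‖x + z‖)) := by
  refine (K_int.add (int_shift c hc z)).mono' ?_ (.of_forall fun x => ?_)
  · exact (K_meas.mul (by fun_prop)).aestronglyMeasurable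
  · rw [Real.norm_of_nonneg (mul_nonneg (K_nonneg x) (exp_pos _).le)]
    exact KE_le c hc z x

lemma KE_bd (c : ℝ) (hc : 0 < c) : ∃ M : ℝ, 0 ≤ M ∧ ∀ z : E3, ∫ x, K x * exp (-c * ‖x + z‖) ≤ M := by
  refine ⟨(∫ x, Set.indicator (Metric.ball (0:E3) 1) K x) + ∫ x : E3, exp (-c * ‖x‖), ?_, fun z => ?_⟩
  · refine add_nonneg (integral_nonneg fun x => Set.indicator_nonneg (fun x _ => K_nonneg x) x)
      (integral_nonneg fun x => (exp_pos _).le)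
  · rw [← integral_add_right_eq_self (fun x : E3 => exp (-c * ‖x‖)) z,
      ← integral_add K_int (int_shift c hc z)]
    exact integral_mono (KE_int c hc z) (K_int.add (int_shift c hc z)) (KE_le c hc z)

lemma KE_decay (c : ℝ) (hc : 0 < c) : ∃ M : ℝ, 0 ≤ M ∧ ∀ z : E3,
    ∫ x, K x * exp (-c * ‖x + z‖) ≤ M * (1 + ‖z‖ ^ 2)⁻¹ := by
  obtain ⟨M1, h1, hM1⟩ := KE_bd c hc
  obtain ⟨M2, h2, hM2⟩ := KE_bd (c/2) (by positivity)
  obtain ⟨C, hC, hC'⟩ := exp_bd (c/2) (by positivity) 2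
  have hI0 : 0 ≤ ∫ x : E3, exp (-c * ‖x‖) := integral_nonneg fun x => (exp_pos _).le
  refine ⟨M1 + ((∫ x : E3, exp (-c * ‖x‖)) + 2 * C * M2), by positivity, fun z => ?_⟩
  rw [← div_eq_mul_inv, le_div_iff₀ (by positivity), mul_add, mul_one]
  refine add_le_add (hM1 z) ?_
  calc (∫ x, K x * exp (-c * ‖x + z‖)) * ‖z‖ ^ 2
      = ∫ x, K x * exp (-c * ‖x + z‖) * ‖z‖ ^ 2 := by rw [integral_mul_const]
    _ ≤ ∫ x : E3, (exp (-c * ‖x + z‖) + 2 * C * (K x * exp (-(c/2) * ‖x + z‖))) := by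
        refine integral_mono ((KE_int c hc z).mul_const _)
          ((int_shift c hc z).add ((KE_int (c/2) (by positivity) z).const_mul _)) fun x => ?_
        have hK := K_nonneg x
        have hz : ‖z‖ ^ 2 ≤ 2 * ‖x‖ ^ 2 + 2 * ‖x + z‖ ^ 2 := by
          have : ‖z‖ ≤ ‖x + z‖ + ‖x‖ := by
            have := norm_sub_le (x + z) x; simpa using this
          nlinarith [norm_nonneg z, sq_nonneg (‖x + z‖ - ‖x‖)]
        have hKx : K x * (2 * ‖x‖ ^ 2) ≤ 1 := by
          unfold K
          rw [inv_mul_eq_div]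
          apply div_le_one_of_le₀ _ (by positivity)
          have : 3 < π := pi_gt_three
          have h1 : 1 ≤ π ^ 2 := by nlinarith
          nlinarith [sq_nonneg ‖x‖]
        have hE : ‖x + z‖ ^ 2 * exp (-(c/2) * ‖x + z‖) ≤ C := by
          refine (hC' _ (norm_nonneg _)).trans (mul_le_of_le_one_right hC ?_)
          apply inv_le_one_of_one_le₀
          nlinarith [sq_nonneg ‖x + z‖]
        have hee : exp (-c * ‖x + z‖) = exp (-(c/2) * ‖x + z‖) * exp (-(c/2) * ‖x + z‖) := by
          rw [← exp_add]; congr 1; ring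
        have he := exp_pos (-(c/2) * ‖x + z‖)
        calc K x * exp (-c * ‖x + z‖) * ‖z‖ ^ 2
            ≤ K x * exp (-c * ‖x + z‖) * (2 * ‖x‖ ^ 2 + 2 * ‖x + z‖ ^ 2) := by gcongr
          _ = (K x * (2 * ‖x‖ ^ 2)) * exp (-c * ‖x + z‖)
              + 2 * (‖x + z‖ ^ 2 * exp (-(c/2) * ‖x + z‖)) * (K x * exp (-(c/2) * ‖x + z‖)) := by
              rw [hee]; ring
          _ ≤ 1 * exp (-c * ‖x + z‖) + 2 * C * (K x * exp (-(c/2) * ‖x + z‖)) := by gcongr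
          _ = _ := by rw [one_mul]
    _ = (∫ x : E3, exp (-c * ‖x‖)) + 2 * C * ∫ x, K x * exp (-(c/2) * ‖x + z‖) := by
        rw [integral_add (int_shift c hc z) ((KE_int (c/2) (by positivity) z).const_mul _),
          integral_const_mul, integral_add_right_eq_self (fun x : E3 => exp (-c * ‖x‖)) z]
    _ ≤ _ := by gcongr; exact hM2 z

section main
variable (ψ : E3 → ℝ) (C c : ℝ)

lemma psi_lip (hc : 0 < c) (hC : 0 < C) (hd : Differentiable ℝ ψ)
    (h1 : ∀ x, ‖fderiv ℝ ψ x‖ ≤ C * exp (-c * ‖x‖)) (x h : E3) (hh : ‖h‖ ≤ 1) :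
    |ψ (x + h) - ψ x| ≤ C * exp c * exp (-c * ‖x‖) * ‖h‖ := by
  have := Convex.norm_image_sub_le_of_norm_fderiv_le (𝕜 := ℝ) (f := ψ)
    (C := C * exp c * exp (-c * ‖x‖)) (s := Metric.closedBall x 1) (x := x) (y := x + h)
    (fun _ _ => hd _) (fun w hw => ?_) (convex_closedBall _ _) (by simp) (by simpa using hh)
  · simpa using this
  · refine (h1 w).trans ?_
    rw [mul_assoc, ← exp_add]
    gcongr
    have h3 : ‖x‖ ≤ ‖w‖ + 1 := by
      have := norm_sub_norm_le x w
      rw [Metric.mem_closedBall, dist_comm, dist_eq_norm] at hw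
      linarith
    nlinarith

lemma exp_split (hc : 0 < c) (x y : E3) :
    exp (-c * ‖x‖) * exp (-c * ‖x + y‖) ≤ exp (-(c/2) * ‖y‖) * exp (-(c/2) * ‖x‖) := by
  rw [← exp_add, ← exp_add]
  apply exp_le_exp.2
  have : ‖y‖ ≤ ‖x + y‖ + ‖x‖ := by
    have := norm_sub_le (x + y) x; simpa using this
  nlinarith [norm_nonneg (x + y)]

lemma g_bd (hc : 0 < c) (hC : 0 < C) (h0 : ∀ x, |ψ x| ≤ C * exp (-c * ‖x‖)) (x y : E3) :
    |ψ x * ψ (x + y)| ≤ C ^ 2 * exp (-(c/2) * ‖y‖) * exp (-(c/2) * ‖x‖) := by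
  rw [abs_mul]
  calc |ψ x| * |ψ (x + y)| ≤ (C * exp (-c * ‖x‖)) * (C * exp (-c * ‖x + y‖)) := by
        gcongr <;> apply h0
    _ = C ^ 2 * (exp (-c * ‖x‖) * exp (-c * ‖x + y‖)) := by ring
    _ ≤ C ^ 2 * (exp (-(c/2) * ‖y‖) * exp (-(c/2) * ‖x‖)) :=
        mul_le_mul_of_nonneg_left (exp_split c hc x y) (by positivity)
    _ = _ := by ring

lemma exp_shift (hc : 0 < c) (x h : E3) (hh : ‖h‖ ≤ 1) :
    exp (-c * ‖x + h‖) ≤ exp c * exp (-c * ‖x‖) := by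
  rw [← exp_add]
  gcongr
  have : ‖x‖ ≤ ‖x + h‖ + ‖h‖ := by
    have := norm_sub_le (x + h) h; simpa using this
  nlinarith

lemma g_lip (hc : 0 < c) (hC : 0 < C) (h0 : ∀ x, |ψ x| ≤ C * exp (-c * ‖x‖))
    (hd : Differentiable ℝ ψ)
    (h1 : ∀ x, ‖fderiv ℝ ψ x‖ ≤ C * exp (-c * ‖x‖)) (x y h : E3) (hh : ‖h‖ ≤ 1) :
    |ψ (x + h) * ψ (x + h + y) - ψ x * ψ (x + y)| ≤
      (2 * C ^ 2 * exp c ^ 2) * exp (-(c/2) * ‖y‖) * exp (-(c/2) * ‖x‖) * ‖h‖ := by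
  have e1 := psi_lip ψ C c hc hC hd h1 x h hh
  have e2 := psi_lip ψ C c hc hC hd h1 (x + y) h hh
  have e3 : |ψ (x + y + h)| ≤ C * (exp c * exp (-c * ‖x + y‖)) :=
    (h0 _).trans (by gcongr; exact exp_shift c hc (x + y) h hh)
  have hE : 1 ≤ exp c := one_le_exp hc.le
  rw [show x + h + y = x + y + h by abel]
  have : ψ (x + h) * ψ (x + y + h) - ψ x * ψ (x + y) =
    (ψ (x + h) - ψ x) * ψ (x + y + h) + ψ x * (ψ (x + y + h) - ψ (x + y)) := by ring
  rw [this]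
  refine (abs_add_le _ _).trans ?_
  rw [abs_mul, abs_mul]
  calc _ ≤ (C * exp c * exp (-c * ‖x‖) * ‖h‖) * (C * (exp c * exp (-c * ‖x + y‖)))
        + (C * exp (-c * ‖x‖)) * (C * exp c * exp (-c * ‖x + y‖) * ‖h‖) := by
          gcongr; exact h0 x
    _ = C ^ 2 * ‖h‖ * (exp c * exp c + 1 * exp c) * (exp (-c * ‖x‖) * exp (-c * ‖x + y‖)) := by ring
    _ ≤ C ^ 2 * ‖h‖ * (exp c * exp c + exp c * exp c) * (exp (-(c/2) * ‖y‖) * exp (-(c/2) * ‖x‖)) := by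
        gcongr ?_ * (_ + ?_ * _) * ?_
        exact exp_split c hc x y
    _ = _ := by ring

def P (y z : E3) : ℝ := ∫ x, K x * (ψ (x + z) * ψ (x + z + y))

lemma P_int (hc : 0 < c) (hC : 0 < C) (h0 : ∀ x, |ψ x| ≤ C * exp (-c * ‖x‖))
    (hd : Continuous ψ) (y z : E3) :
    Integrable (fun x => K x * (ψ (x + z) * ψ (x + z + y))) := by
  refine ((KE_int (c/2) (by positivity) z).const_mul (C ^ 2 * exp (-(c/2) * ‖y‖))).mono' ?_
    (.of_forall fun x => ?_)
  · exact (K_meas.mul (by fun_prop)).aestronglyMeasurable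
  · rw [norm_mul, Real.norm_of_nonneg (K_nonneg x), Real.norm_eq_abs]
    calc _ ≤ K x * (C ^ 2 * exp (-(c/2) * ‖y‖) * exp (-(c/2) * ‖x + z‖)) :=
          mul_le_mul_of_nonneg_left (g_bd ψ C c hc hC h0 (x + z) y) (K_nonneg x)
      _ = _ := by ring

lemma P_bd (hc : 0 < c) (hC : 0 < C) (h0 : ∀ x, |ψ x| ≤ C * exp (-c * ‖x‖)) (y z : E3) :
    |P ψ y z| ≤ C ^ 2 * exp (-(c/2) * ‖y‖) * ∫ x, K x * exp (-(c/2) * ‖x + z‖) := by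
  rw [← integral_const_mul, ← Real.norm_eq_abs, P]
  refine norm_integral_le_of_norm_le ((KE_int (c/2) (by positivity) z).const_mul _)
    (.of_forall fun x => ?_)
  rw [norm_mul, Real.norm_of_nonneg (K_nonneg x), Real.norm_eq_abs]
  calc _ ≤ K x * (C ^ 2 * exp (-(c/2) * ‖y‖) * exp (-(c/2) * ‖x + z‖)) :=
        mul_le_mul_of_nonneg_left (g_bd ψ C c hc hC h0 (x + z) y) (K_nonneg x)
    _ = _ := by ring

lemma P_lip (hc : 0 < c) (hC : 0 < C) (h0 : ∀ x, |ψ x| ≤ C * exp (-c * ‖x‖))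
    (hd : Differentiable ℝ ψ)
    (h1 : ∀ x, ‖fderiv ℝ ψ x‖ ≤ C * exp (-c * ‖x‖)) (y z w : E3) (hh : ‖w - z‖ ≤ 1) :
    |P ψ y w - P ψ y z| ≤ (2 * C ^ 2 * exp c ^ 2) * exp (-(c/2) * ‖y‖) *
      (∫ x, K x * exp (-(c/2) * ‖x + z‖)) * ‖w - z‖ := by
  rw [mul_right_comm, ← integral_const_mul, ← Real.norm_eq_abs, P, P,
    ← integral_sub (P_int ψ C c hc hC h0 hd.continuous y w)
      (P_int ψ C c hc hC h0 hd.continuous y z)]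
  refine norm_integral_le_of_norm_le ((KE_int (c/2) (by positivity) z).const_mul _)
    (.of_forall fun x => ?_)
  rw [← mul_sub, norm_mul, Real.norm_of_nonneg (K_nonneg x), Real.norm_eq_abs]
  have := g_lip ψ C c hc hC h0 hd h1 (x + z) y (w - z) hh
  rw [show x + z + (w - z) = x + w by abel] at this
  refine (mul_le_mul_of_nonneg_left this (K_nonneg x)).trans (le_of_eq ?_)
  ring

lemma P_cont (hc : 0 < c) (hC : 0 < C) (h0 : ∀ x, |ψ x| ≤ C * exp (-c * ‖x‖))
    (hd : Continuous ψ) : Continuous (fun p : E3 × E3 => P ψ p.1 p.2) := by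
  rw [continuous_iff_continuousAt]
  rintro ⟨y, z⟩
  refine continuousAt_of_dominated
    (bound := fun x => C ^ 2 * exp (c/2) * (K x * exp (-(c/2) * ‖x + z‖)))
    (.of_forall fun p => (P_int ψ C c hc hC h0 hd p.1 p.2).aestronglyMeasurable) ?_
    ((KE_int (c/2) (by positivity) z).const_mul _) (.of_forall fun x => by fun_prop)
  have : ∀ᶠ p : E3 × E3 in nhds (y, z), p.2 ∈ Metric.ball z 1 :=
    continuous_snd.continuousAt.eventually_mem (Metric.ball_mem_nhds _ one_pos)
  filter_upwards [this] with p hp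
  refine .of_forall fun x => ?_
  rw [norm_mul, Real.norm_of_nonneg (K_nonneg x), Real.norm_eq_abs]
  have e1 := g_bd ψ C c hc hC h0 (x + p.2) p.1
  have e2 := exp_shift (c/2) (by positivity) (x + z) (p.2 - z)
    (by rw [← dist_eq_norm]; exact (Metric.mem_ball.1 hp).le)
  rw [show x + z + (p.2 - z) = x + p.2 by abel] at e2
  have e3 : exp (-(c/2) * ‖p.1‖) ≤ 1 := by
    rw [exp_le_one_iff]; have := norm_nonneg p.1; nlinarith
  have hK := K_nonneg x
  calc _ ≤ K x * (C ^ 2 * exp (-(c/2) * ‖p.1‖) * exp (-(c/2) * ‖x + p.2‖)) := by gcongr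
    _ ≤ K x * (C ^ 2 * 1 * (exp (c/2) * exp (-(c/2) * ‖x + z‖))) := by gcongr
    _ = _ := by ring

lemma H_bd (hc : 0 < c) (hC : 0 < C) (h0 : ∀ x, |ψ x| ≤ C * exp (-c * ‖x‖)) (y : E3) :
    |∫ x, ψ x * ψ (x + y)| ≤ C ^ 2 * (∫ x : E3, exp (-(c/2) * ‖x‖)) * exp (-(c/2) * ‖y‖) := by
  rw [mul_right_comm, ← integral_const_mul, ← Real.norm_eq_abs]
  exact norm_integral_le_of_norm_le ((int_exp0 (c/2) (by positivity)).const_mul _)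
    (.of_forall fun x => g_bd ψ C c hc hC h0 x y)

lemma H_cont (hc : 0 < c) (hC : 0 < C) (h0 : ∀ x, |ψ x| ≤ C * exp (-c * ‖x‖))
    (hd : Continuous ψ) : Continuous (fun y => ∫ x, ψ x * ψ (x + y)) := by
  refine continuous_of_dominated (bound := fun x => C ^ 2 * 1 * exp (-(c/2) * ‖x‖))
    (fun y => Continuous.aestronglyMeasurable (by fun_prop)) (fun y => .of_forall fun x => ?_)
    ((int_exp0 (c/2) (by positivity)).const_mul _) (.of_forall fun x => by fun_prop)
  refine (g_bd ψ C c hc hC h0 x y).trans ?_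
  have e3 : exp (-(c/2) * ‖y‖) ≤ 1 := by
    rw [exp_le_one_iff]; have := norm_nonneg y; nlinarith
  gcongr

end main

/-- final packaging -/
lemma finish (F : E3 → E3 → ℝ) (c B : ℝ) (hc : 0 < c) (hB : 0 ≤ B)
    (hF0 : ∀ y z, 0 ≤ F y z)
    (hF : ∀ y z, F y z ≤ (B * exp (-c * ‖y‖) * (1 + ‖z‖ ^ 2)⁻¹) ^ 2)
    (hm : Measurable (Function.uncurry F)) :
    (∃ M : ℝ, ∀ y, Real.sqrt (∫ z, F y z) ≤ M) ∧
    ∀ n : ℕ, Integrable (fun y => ‖y‖ ^ n * Real.sqrt (∫ z, F y z)) := by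
  set I := ∫ z : E3, ((1 + ‖z‖ ^ 2) ^ 2)⁻¹ with hI
  have key : ∀ y, Real.sqrt (∫ z, F y z) ≤ B * √I * exp (-c * ‖y‖) := by
    intro y
    have : ∫ z, F y z ≤ (B * exp (-c * ‖y‖)) ^ 2 * I := by
      rw [hI, ← integral_const_mul]
      refine integral_mono_of_nonneg (.of_forall fun z => hF0 y z) (intW.const_mul _)
        (.of_forall fun z => (hF y z).trans (le_of_eq ?_))
      simp only [mul_pow, inv_pow]
    calc _ ≤ √((B * exp (-c * ‖y‖)) ^ 2 * I) := Real.sqrt_le_sqrt this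
      _ = B * exp (-c * ‖y‖) * √I := by
        rw [Real.sqrt_mul (by positivity), Real.sqrt_sq (by positivity)]
      _ = _ := by ring
  refine ⟨⟨B * √I, fun y => (key y).trans (mul_le_of_le_one_right (by positivity) ?_)⟩, fun n => ?_⟩
  · rw [exp_le_one_iff]; have := norm_nonneg y; nlinarith
  · refine ((int_exp c hc n).const_mul (B * √I)).mono' ?_ (.of_forall fun y => ?_)
    · have := (hm.stronglyMeasurable.integral_prod_right (ν := volume)).measurable
      exact Measurable.aestronglyMeasurable (by fun_prop)
    · rw [Real.norm_of_nonneg (by positivity)]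
      calc _ ≤ ‖y‖ ^ n * (B * √I * exp (-c * ‖y‖)) := by gcongr; exact key y
        _ = _ := by ring

/-- For a smooth, radial, positive, normalized `ψ` on `ℝ³` whose
derivatives up to second order decay exponentially, with Pekar field
`φ(z) = ∫ ψ(x)²/(2π²|z−x|²) dx`, overlap `H(y) = ∫ ψ(x)ψ(x+y) dx` and
`l_y(z) = H(y)φ(z) − ∫ ψ(x)ψ(x+y)/(2π²|x−z|²) dx`, for `k = 0,1` one has
`sup_y ‖∇^k l_y‖_{L²} < ∞` and `∫ |y|^n ‖∇^k l_y‖_{L²} dy < ∞` for every `n ∈ ℕ`. -/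
theorem statement11
    (ψ : EuclideanSpace ℝ (Fin 3) → ℝ) (C₀ : ℝ) (hC₀ : 0 < C₀)
    (hsmooth : ContDiff ℝ (⊤ : ℕ∞) ψ)
    (hpos : ∀ x, 0 < ψ x)
    (hradial : ∃ f : ℝ → ℝ, ∀ x, ψ x = f ‖x‖)
    (hnorm : ∫ x, ψ x ^ 2 = 1)
    (hdecay : ∀ k : ℕ, k ≤ 2 → ∀ x,
      ‖iteratedFDeriv ℝ k ψ x‖ ≤ C₀ * Real.exp (-‖x‖ / C₀))
    (φ : EuclideanSpace ℝ (Fin 3) → ℝ)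
    (hφ : ∀ z, φ z = ∫ x, ψ x ^ 2 / (2 * π ^ 2 * ‖z - x‖ ^ 2))
    (H : EuclideanSpace ℝ (Fin 3) → ℝ)
    (hH : ∀ y, H y = ∫ x, ψ x * ψ (x + y))
    (l : EuclideanSpace ℝ (Fin 3) → EuclideanSpace ℝ (Fin 3) → ℝ)
    (hl : ∀ y z, l y z =
      H y * φ z - ∫ x, ψ x * ψ (x + y) / (2 * π ^ 2 * ‖x - z‖ ^ 2)) :
    (∃ Mconst : ℝ, ∀ y,
      Real.sqrt (∫ z, l y z ^ 2) ≤ Mconst ∧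
      Real.sqrt (∫ z, ‖fderiv ℝ (l y) z‖ ^ 2) ≤ Mconst) ∧
    (∀ n : ℕ,
      Integrable (fun y => ‖y‖ ^ n * Real.sqrt (∫ z, l y z ^ 2)) ∧
      Integrable (fun y => ‖y‖ ^ n * Real.sqrt (∫ z, ‖fderiv ℝ (l y) z‖ ^ 2))) := by
  have hc : 0 < 1 / C₀ := by positivity
  set c := 1 / C₀ with hcdef
  have hexp : ∀ x : E3, exp (-‖x‖ / C₀) = exp (-c * ‖x‖) := fun x => by
    congr 1; rw [hcdef]; ring
  have h0 : ∀ x, |ψ x| ≤ C₀ * exp (-c * ‖x‖) := fun x => by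
    have := hdecay 0 (by norm_num) x
    rwa [norm_iteratedFDeriv_zero, Real.norm_eq_abs, hexp] at this
  have h1 : ∀ x, ‖fderiv ℝ ψ x‖ ≤ C₀ * exp (-c * ‖x‖) := fun x => by
    have := hdecay 1 (by norm_num) x
    rwa [norm_iteratedFDeriv_one, hexp] at this
  have hd : Differentiable ℝ ψ := hsmooth.differentiable (by simp)
  have hP : ∀ y z, ∫ x, ψ x * ψ (x + y) / (2 * π ^ 2 * ‖x - z‖ ^ 2) = P ψ y z := by
    intro y z
    rw [P, ← integral_add_right_eq_self _ z]
    congr 1; ext x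
    simp only [add_sub_cancel_right, K]
    rw [div_eq_mul_inv, mul_comm]
  have hφP : ∀ z, φ z = P ψ 0 z := by
    intro z
    rw [hφ, ← hP]
    congr 1; ext x
    rw [add_zero, norm_sub_rev, sq (ψ x)]
  have hl' : ∀ y z, l y z = H y * P ψ 0 z - P ψ y z := fun y z => by
    rw [hl, hφP, hP]
  have hHc : Continuous H := by
    rw [show H = fun y => ∫ x, ψ x * ψ (x + y) from funext hH]
    exact H_cont ψ C₀ c hc hC₀ h0 hd.continuous
  have hlc : Continuous (Function.uncurry l) := by
    have : Function.uncurry l = fun p : E3 × E3 => H p.1 * P ψ 0 p.2 - P ψ p.1 p.2 := by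
      ext p; exact hl' p.1 p.2
    rw [this]
    have hPc := P_cont ψ C₀ c hc hC₀ h0 hd.continuous
    have hPc0 : Continuous (fun p : E3 × E3 => P ψ 0 p.2) :=
      hPc.comp (f := fun p : E3 × E3 => ((0 : E3), p.2)) (by fun_prop)
    fun_prop
  obtain ⟨M, hM0, hM⟩ := KE_decay (c/2) (by positivity)
  set A := C₀ ^ 2 * ∫ x : E3, exp (-(c/2) * ‖x‖) with hA
  have hA0 : 0 ≤ A := mul_nonneg (by positivity) (integral_nonneg fun x => (exp_pos _).le)
  have hHb : ∀ y, |H y| ≤ A * exp (-(c/2) * ‖y‖) := fun y => by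
    rw [hH]; exact H_bd ψ C₀ c hc hC₀ h0 y
  have hbd : ∀ y z, |l y z| ≤ ((A + 1) * C₀ ^ 2 * M) * exp (-(c/2) * ‖y‖) * (1 + ‖z‖ ^ 2)⁻¹ := by
    intro y z
    rw [hl']
    have e0 := P_bd ψ C₀ c hc hC₀ h0 0 z
    have e1 := P_bd ψ C₀ c hc hC₀ h0 y z
    simp only [norm_zero, mul_zero, exp_zero, mul_one] at e0
    refine (abs_sub _ _).trans ?_
    rw [abs_mul]
    calc _ ≤ (A * exp (-(c/2) * ‖y‖)) * (C₀ ^ 2 * (M * (1 + ‖z‖ ^ 2)⁻¹)) +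
          C₀ ^ 2 * exp (-(c/2) * ‖y‖) * (M * (1 + ‖z‖ ^ 2)⁻¹) := by
          refine add_le_add (mul_le_mul (hHb y) (e0.trans ?_) (abs_nonneg _) (by positivity))
            (e1.trans ?_)
          · exact mul_le_mul_of_nonneg_left (hM z) (by positivity)
          · exact mul_le_mul_of_nonneg_left (hM z) (by positivity)
      _ = _ := by ring
  have hbd' : ∀ y z, ‖fderiv ℝ (l y) z‖ ≤
      ((A + 1) * (2 * C₀ ^ 2 * exp c ^ 2) * M) * exp (-(c/2) * ‖y‖) * (1 + ‖z‖ ^ 2)⁻¹ := by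
    intro y z
    refine norm_fderiv_le_of_lip' ℝ (by positivity) ?_
    filter_upwards [Metric.ball_mem_nhds z one_pos] with w hw
    have hw' : ‖w - z‖ ≤ 1 := by rw [← dist_eq_norm]; exact (Metric.mem_ball.1 hw).le
    have e0 := P_lip ψ C₀ c hc hC₀ h0 hd h1 0 z w hw'
    have e1 := P_lip ψ C₀ c hc hC₀ h0 hd h1 y z w hw'
    simp only [norm_zero, mul_zero, exp_zero, mul_one] at e0
    rw [hl', hl', Real.norm_eq_abs,
      show H y * P ψ 0 w - P ψ y w - (H y * P ψ 0 z - P ψ y z) =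
        H y * (P ψ 0 w - P ψ 0 z) - (P ψ y w - P ψ y z) by ring]
    refine (abs_sub _ _).trans ?_
    rw [abs_mul]
    calc _ ≤ (A * exp (-(c/2) * ‖y‖)) *
            ((2 * C₀ ^ 2 * exp c ^ 2) * (M * (1 + ‖z‖ ^ 2)⁻¹) * ‖w - z‖) +
          (2 * C₀ ^ 2 * exp c ^ 2) * exp (-(c/2) * ‖y‖) * (M * (1 + ‖z‖ ^ 2)⁻¹) * ‖w - z‖ := by
          refine add_le_add (mul_le_mul (hHb y) (e0.trans ?_) (abs_nonneg _) (by positivity))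
            (e1.trans ?_)
          · gcongr; exact hM z
          · gcongr; exact hM z
      _ = _ := by ring
  obtain ⟨⟨M1, hM1⟩, hI1⟩ := finish (fun y z => l y z ^ 2) (c/2) ((A + 1) * C₀ ^ 2 * M)
    (by positivity) (by positivity) (fun y z => sq_nonneg _)
    (fun y z => by rw [← sq_abs]; exact pow_le_pow_left₀ (abs_nonneg _) (hbd y z) 2)
    (hlc.pow 2).measurable
  obtain ⟨⟨M2, hM2⟩, hI2⟩ := finish (fun y z => ‖fderiv ℝ (l y) z‖ ^ 2) (c/2)
    ((A + 1) * (2 * C₀ ^ 2 * exp c ^ 2) * M)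
    (by positivity) (by positivity) (fun y z => sq_nonneg _)
    (fun y z => pow_le_pow_left₀ (norm_nonneg _) (hbd' y z) 2)
    ((measurable_fderiv_with_param ℝ hlc).norm.pow_const 2)
  exact ⟨⟨max M1 M2, fun y => ⟨(hM1 y).trans (le_max_left _ _), (hM2 y).trans (le_max_right _ _)⟩⟩,
    fun n => ⟨hI1 n, hI2 n⟩⟩
end
end

section
/- Let E be a complex inner product space, let n ∈ ℕ, and let v₀, v₁, …, v_n ∈ E. Suppose there are real numbers t and ε ≥ 0 such that |⟨vᵢ, vⱼ⟩ − t δᵢⱼ| ≤ ε for all 0 ≤ i, j ≤ n, and that t > (n+1) ε. Then the vectors v₀, …, v_n are linearly independent; in particular their span has dimension n+1. -/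
open scoped InnerProductSpace

/-- In a complex inner product space, if `v₀, …, v_n` satisfy
`|⟨vᵢ, vⱼ⟩ − t δᵢⱼ| ≤ ε` for all `i, j` with `t > (n+1)ε ≥ 0`, then they are linearly
independent; in particular their span has dimension `n+1`. -/
theorem statement15
    {E : Type*} [NormedAddCommGroup E] [InnerProductSpace ℂ E]
    (n : ℕ) (v : Fin (n + 1) → E) (t ε : ℝ) (hε : 0 ≤ ε)
    (h : ∀ i j, ‖(⟪v i, v j⟫_ℂ) - (if i = j then (t : ℂ) else 0)‖ ≤ ε)
    (ht : (n + 1 : ℝ) * ε < t) :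
    LinearIndependent ℂ v ∧
      Module.finrank ℂ (Submodule.span ℂ (Set.range v)) = n + 1 := by
  have hli : LinearIndependent ℂ v := by
    apply Matrix.linearIndependent_of_posDef_gram
    refine (Matrix.posSemidef_gram ℂ v).posDef_iff_det_ne_zero.mpr ?_
    apply det_ne_zero_of_sum_row_lt_diag
    intro k
    simp only [Matrix.gram_apply]
    have h1 : ∑ j ∈ Finset.univ.erase k, ‖⟪v k, v j⟫_ℂ‖ ≤ n * ε := by
      calc ∑ j ∈ Finset.univ.erase k, ‖⟪v k, v j⟫_ℂ‖
          ≤ ∑ j ∈ Finset.univ.erase k, ε := by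
            apply Finset.sum_le_sum
            intro j hj
            have hkj := h k j
            rwa [if_neg (Finset.ne_of_mem_erase hj).symm, sub_zero] at hkj
        _ = n * ε := by simp [Finset.card_erase_of_mem]
    have h2 := h k k
    rw [if_pos rfl, norm_sub_rev] at h2
    have h3 := norm_sub_norm_le (t : ℂ) ⟪v k, v k⟫_ℂ
    have h4 : t ≤ ‖(t : ℂ)‖ := by
      rw [Complex.norm_real]
      exact le_abs_self t
    linarith
  exact ⟨hli, by simpa using finrank_span_eq_card hli⟩
end
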